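/- Orthonormality of the polynomials P_n: define K₀(u)=1, K_n(u)=∏_{j=1}^n (1/j²)(u²+(j−1/2)²), and P_n(u)=Σ_{j=0}^n C(n,j)(−1)^j K_j(u). Then ∫₀^∞ P_n(u) P_m(u) · (2πu sinh(πu)/cosh²(πu)) du = δ_{nm} for all n, m ∈ ℕ. -/

import Mathlib

/-!
The `P_n` are continuous dual Hahn polynomials with all parameters equal to `1/2`. With `w` the
weight, the key fact is the Gram matrix `∫ K_j K_k w = C(j + k, j)` (`integral_K_mul_K`). Since
`C(j + k, j) = ∑ i, C(j, i) C(k, i)`, orthonormality of the `P_n` is then binomial inversion; here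
it is carried out with iterated forward differences (`sum_sum_choose`).

The Gram matrix satisfies a recurrence reducing it to the column `∫ K_j w = 1` (`integral_Kpoly`).
For `j = 0` this is an explicit antiderivative (`integral_wt`). The step from `j` to `j + 1` is the
vanishing of `∫ K_j (u² - j - 3/4) w` (`integral_recurrence`): up to a constant, that integrand is
the difference of the values at `u - i/2` and `u + i/2` of the odd function
`z³ cosh(πz) / sinh²(πz) · ∏_{l=1}^j (z² + l²)` (`contourFn_bot_sub_top`). Cauchy's theorem on
`[0, T] × [-1/2, 1/2]` turns its integral over `[0, T]` into integrals over the vertical sides: the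
one on the imaginary axis vanishes by oddness and the other tends to `0` as `T → ∞`.
-/

open Real MeasureTheory

noncomputable def Kpoly (n : ℕ) (u : ℝ) : ℝ :=
  ∏ j ∈ Finset.Icc 1 n, (1 / (j : ℝ) ^ 2) * (u ^ 2 + ((j : ℝ) - 1 / 2) ^ 2)

noncomputable def Ppoly (n : ℕ) (u : ℝ) : ℝ :=
  ∑ j ∈ Finset.range (n + 1), (n.choose j : ℝ) * (-1) ^ j * Kpoly j u

open Filter Topology

/-! ### The weight and the polynomials `K_j` -/

/-- The weight function `2πu sinh(πu)/cosh²(πu)`. -/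
noncomputable def wt (u : ℝ) : ℝ := 2 * π * u * Real.sinh (π * u) / Real.cosh (π * u) ^ 2

lemma continuous_wt : Continuous wt := by
  unfold wt
  exact Continuous.div (by fun_prop) (by fun_prop) fun u => pow_ne_zero _ (Real.cosh_pos _).ne'

lemma inv_cosh_le (x : ℝ) : (Real.cosh x)⁻¹ ≤ 2 * Real.exp (-x) := by
  rw [Real.exp_neg, inv_le_iff_one_le_mul₀ (Real.cosh_pos x), Real.cosh_eq]
  have h := Real.exp_pos x
  have h' := Real.exp_pos (-x)
  have : (Real.exp x)⁻¹ * Real.exp x = 1 := inv_mul_cancel₀ h.ne'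
  nlinarith [mul_pos (inv_pos.2 h) h']

lemma abs_wt_le {u : ℝ} (hu : 0 ≤ u) : |wt u| ≤ 4 * π * (u * Real.exp (-π * u)) := by
  have hc := Real.cosh_pos (π * u)
  have hs : 0 ≤ Real.sinh (π * u) := Real.sinh_nonneg_iff.2 (by positivity)
  have hsc : Real.sinh (π * u) ≤ Real.cosh (π * u) := (Real.sinh_lt_cosh _).le
  have h0 : wt u ≤ 2 * π * u * (Real.cosh (π * u))⁻¹ := by
    unfold wt
    rw [div_le_iff₀ (by positivity)]
    have : 2 * π * u * (Real.cosh (π * u))⁻¹ * Real.cosh (π * u) ^ 2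
        = 2 * π * u * Real.cosh (π * u) := by field_simp
    rw [this]
    gcongr
  have h1 : 0 ≤ wt u := by unfold wt; positivity
  rw [abs_of_nonneg h1]
  refine h0.trans ?_
  have := inv_cosh_le (π * u)
  calc 2 * π * u * (Real.cosh (π * u))⁻¹ ≤ 2 * π * u * (2 * Real.exp (-(π * u))) := by gcongr
    _ = _ := by rw [neg_mul]; ring

lemma tendsto_shift_pow_mul_exp (c : ℝ) (k : ℕ) :
    Tendsto (fun T : ℝ => (T + c) ^ k * Real.exp (-(π * T))) atTop (𝓝 0) := by
  have h := (isLittleO_pow_exp_pos_mul_atTop k pi_pos).tendsto_div_nhds_zero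
  have h2 := (h.comp (tendsto_atTop_add_const_right atTop c tendsto_id)).mul_const
    (Real.exp (π * c))
  rw [zero_mul] at h2
  refine h2.congr fun T => ?_
  simp only [Function.comp, id]
  rw [mul_add, Real.exp_add, Real.exp_neg]
  field_simp

lemma integrableOn_pow_mul_wt (k : ℕ) :
    IntegrableOn (fun u => u ^ k * wt u) (Set.Ioi 0) := by
  refine integrable_of_isBigO_exp_neg (b := π / 2) (by positivity)
    ((continuous_pow k).mul continuous_wt).continuousOn ?_
  have h1 : (fun u => u ^ k * wt u) =O[atTop]
      fun u : ℝ => u ^ (k + 1) * Real.exp (-π * u) := by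
    refine Asymptotics.IsBigO.of_bound (4 * π) ?_
    filter_upwards [eventually_ge_atTop 0] with u hu
    rw [norm_mul, Real.norm_eq_abs (wt u), Real.norm_of_nonneg (by positivity),
      Real.norm_of_nonneg (by positivity)]
    calc u ^ k * |wt u| ≤ u ^ k * (4 * π * (u * Real.exp (-π * u))) := by
          gcongr; exact abs_wt_le hu
      _ = _ := by ring
  refine h1.trans ?_
  have h2 := (isLittleO_pow_exp_pos_mul_atTop (k + 1) (half_pos pi_pos)).isBigO.mul
    (Asymptotics.isBigO_refl (fun u : ℝ => Real.exp (-π * u)) atTop)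
  refine h2.congr_right fun u => ?_
  rw [← Real.exp_add]
  congr 1
  ring

lemma integrableOn_poly_mul_wt (p : Polynomial ℝ) :
    IntegrableOn (fun u => p.eval u * wt u) (Set.Ioi 0) := by
  simp_rw [Polynomial.eval_eq_sum_range, Finset.sum_mul, mul_assoc]
  exact integrable_finsetSum _ fun i _ => (integrableOn_pow_mul_wt i).const_mul _

lemma exists_poly_Kpoly (n : ℕ) : ∃ p : Polynomial ℝ, ∀ u, p.eval u = Kpoly n u := by
  refine ⟨∏ j ∈ Finset.Icc 1 n, (Polynomial.C (1 / (j : ℝ) ^ 2) *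
    (Polynomial.X ^ 2 + Polynomial.C (((j : ℝ) - 1 / 2) ^ 2))), fun u => ?_⟩
  rw [Polynomial.eval_prod, Kpoly]
  simp

lemma continuous_Kpoly (n : ℕ) : Continuous (Kpoly n) := by
  unfold Kpoly
  fun_prop

lemma integrableOn_K_mul_K (j k : ℕ) :
    IntegrableOn (fun u => Kpoly j u * Kpoly k u * wt u) (Set.Ioi 0) := by
  obtain ⟨p, hp⟩ := exists_poly_Kpoly j
  obtain ⟨q, hq⟩ := exists_poly_Kpoly k
  simpa [hp, hq] using integrableOn_poly_mul_wt (p * q)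

lemma Kpoly_zero (u : ℝ) : Kpoly 0 u = 1 := by simp [Kpoly]

lemma Kpoly_succ (n : ℕ) (u : ℝ) :
    ((n : ℝ) + 1) ^ 2 * Kpoly (n + 1) u = Kpoly n u * (u ^ 2 + ((n : ℝ) + 1 / 2) ^ 2) := by
  unfold Kpoly
  rw [Finset.prod_Icc_succ_top (by omega)]
  push_cast
  field_simp
  ring_nf

/-- The total mass is one: an antiderivative of the weight is
`-2u / cosh(πu) + (2/π) arctan(sinh(πu))`. -/
lemma integral_wt : ∫ u in Set.Ioi (0 : ℝ), wt u = 1 := by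
  have hd : ∀ x ∈ Set.Ici (0 : ℝ), HasDerivAt
      (fun u : ℝ => -2 * u * (Real.cosh (π * u))⁻¹ + 2 / π * Real.arctan (Real.sinh (π * u)))
      (wt x) x := by
    intro x _
    have hl : HasDerivAt (fun u : ℝ => π * u) π x := by simpa using (hasDerivAt_id x).const_mul π
    have hc := Real.cosh_pos (π * x)
    have h1 := ((hasDerivAt_id x).const_mul (-2)).mul (hl.cosh.inv hc.ne')
    have h2 := (hl.sinh.arctan).const_mul (2 / π)
    refine (h1.add h2).congr_deriv ?_
    have : 1 + Real.sinh (π * x) ^ 2 = Real.cosh (π * x) ^ 2 := by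
      rw [Real.cosh_sq]; ring
    rw [this, wt]
    simp only [id, Pi.inv_apply]
    field_simp
    ring
  have hlim : Tendsto
      (fun u : ℝ => -2 * u * (Real.cosh (π * u))⁻¹ + 2 / π * Real.arctan (Real.sinh (π * u)))
      atTop (𝓝 1) := by
    have hA : Tendsto (fun u : ℝ => -2 * u * (Real.cosh (π * u))⁻¹) atTop (𝓝 0) := by
      refine squeeze_zero_norm' ?_ (a := fun u => 4 * ((u + 0) ^ 1 * Real.exp (-(π * u)))) ?_
      · filter_upwards [eventually_ge_atTop 0] with u hu
        rw [norm_mul, norm_inv, Real.norm_of_nonneg (Real.cosh_pos _).le, norm_mul,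
          Real.norm_of_nonneg hu]
        have := mul_le_mul_of_nonneg_left (inv_cosh_le (π * u)) hu
        norm_num
        linarith
      · simpa using (tendsto_shift_pow_mul_exp 0 1).const_mul 4
    have hS : Tendsto (fun u : ℝ => Real.sinh (π * u)) atTop atTop := by
      refine tendsto_atTop_mono' atTop ?_ (tendsto_id.const_mul_atTop pi_pos)
      filter_upwards [eventually_ge_atTop 0] with u hu
      exact Real.self_le_sinh_iff.2 (by simp only [id]; positivity)
    have hB := ((tendsto_nhds_of_tendsto_nhdsWithin Real.tendsto_arctan_atTop).comp hS).const_mul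
      (2 / π)
    have := hA.add hB
    rwa [show (0 : ℝ) + 2 / π * (π / 2) = 1 by field_simp; simp] at this
  have := integral_Ioi_of_hasDerivAt_of_tendsto' hd
    (by simpa using integrableOn_pow_mul_wt 0) hlim
  simpa using this

/-! ### The contour integral -/

/-- `z³ cosh(πz) / sinh²(πz) · ∏_{l=1}^j (z² + l²)`. In the strip `|Im z| < 1` its only singularity,
at `0`, is removable, and the junk value `0` at `0` is the correct one. -/
noncomputable def contourFn (j : ℕ) (z : ℂ) : ℂ :=
  z ^ 3 * Complex.cosh (π * z) / Complex.sinh (π * z) ^ 2 *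
    ∏ l ∈ Finset.Icc 1 j, (z ^ 2 + (l : ℂ) ^ 2)

lemma contourFn_neg (j : ℕ) (z : ℂ) : contourFn j (-z) = -contourFn j z := by
  simp only [contourFn, mul_neg, Complex.cosh_neg, Complex.sinh_neg, even_two.neg_pow]
  ring

lemma sinh_pi_mul_ne_zero {z : ℂ} (hz : z ≠ 0) (h : |z.im| ≤ 1 / 2) :
    Complex.sinh (π * z) ≠ 0 := by
  intro h0
  have h1 : Complex.sin (π * z * Complex.I) = 0 := by
    rw [Complex.sin_mul_I, h0, zero_mul]
  obtain ⟨k, hk⟩ := Complex.sin_eq_zero_iff.1 h1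
  have h2 : z * Complex.I = k := by
    have : (π : ℂ) ≠ 0 := by exact_mod_cast pi_ne_zero
    apply mul_left_cancel₀ this
    rw [← mul_assoc, hk, mul_comm]
  have him : -z.im = k := by simpa using congrArg Complex.re h2
  have hre : z.re = 0 := by simpa using congrArg Complex.im h2
  have hk0 : k = 0 := by
    have : |(k : ℝ)| < 1 := by rw [← him, abs_neg]; linarith
    exact Int.abs_lt_one_iff.1 (by exact_mod_cast this)
  apply hz
  apply Complex.ext
  · simpa using hre
  · rw [hk0] at him; simpa using him

lemma differentiableAt_contourFn (j : ℕ) {z : ℂ} (hz : z ≠ 0) (h : |z.im| ≤ 1 / 2) :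
    DifferentiableAt ℂ (contourFn j) z := by
  unfold contourFn
  have hs := pow_ne_zero 2 (sinh_pi_mul_ne_zero hz h)
  refine DifferentiableAt.mul (DifferentiableAt.div ?_ ?_ hs) ?_
  · fun_prop
  · fun_prop
  · fun_prop

lemma continuousAt_contourFn_zero (j : ℕ) : ContinuousAt (contourFn j) 0 := by
  rw [continuousAt_iff_punctured_nhds]
  have hpi : (π : ℂ) ≠ 0 := by exact_mod_cast pi_ne_zero
  have hd : HasDerivAt (fun z : ℂ => Complex.sinh (π * z)) π 0 := by
    have hl : HasDerivAt (fun u : ℂ => (π : ℂ) * u) π 0 := by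
      simpa using (hasDerivAt_id (0 : ℂ)).const_mul (π : ℂ)
    simpa using hl.csinh
  have hs := (hasDerivAt_iff_tendsto_slope.1 hd).inv₀ hpi
  have hc : Continuous fun z : ℂ => z * Complex.cosh (π * z) *
      ∏ l ∈ Finset.Icc 1 j, (z ^ 2 + (l : ℂ) ^ 2) := by fun_prop
  have h := ((hc.tendsto 0).mono_left (nhdsWithin_le_nhds (s := {0}ᶜ))).mul (hs.pow 2)
  have e : contourFn j 0 = 0 * Complex.cosh (π * 0) *
      (∏ l ∈ Finset.Icc 1 j, ((0 : ℂ) ^ 2 + (l : ℂ) ^ 2)) * ((π : ℂ)⁻¹) ^ 2 := by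
    simp [contourFn]
  rw [e]
  refine h.congr fun z => ?_
  simp only [slope_def_field, mul_zero, Complex.sinh_zero, sub_zero, contourFn, inv_div]
  field_simp

/-- For `e = ±i` the factors of `∏ ((u + e/2)² + l²)` split as
`(u + e(l + 1/2))(u - e(l - 1/2))`, and regrouping them gives `j!² K_j`. -/
lemma prod_shift (j : ℕ) (u : ℝ) {e : ℂ} (he : e ^ 2 = -1) :
    (u + e / 2) * ∏ l ∈ Finset.Icc 1 j, (((u : ℂ) + e / 2) ^ 2 + (l : ℂ) ^ 2)
      = (j.factorial : ℂ) ^ 2 * (Kpoly j u : ℝ) * (u + e * (j + 1 / 2)) := by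
  induction j with
  | zero => simp [Kpoly_zero]; ring
  | succ j ih =>
    rw [Finset.prod_Icc_succ_top (by omega), ← mul_assoc, ih, Nat.factorial_succ]
    have hK : ((j : ℂ) + 1) ^ 2 * (Kpoly (j + 1) u : ℝ)
        = (Kpoly j u : ℝ) * ((u : ℂ) ^ 2 + ((j : ℂ) + 1 / 2) ^ 2) := by
      have h := congrArg (fun x : ℝ => (x : ℂ)) (Kpoly_succ j u)
      push_cast at h
      exact h
    push_cast
    have : (((j : ℂ) + 1) * (j.factorial : ℂ)) ^ 2 * (Kpoly (j + 1) u : ℝ)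
        = (j.factorial : ℂ) ^ 2 * ((Kpoly j u : ℝ) * ((u : ℂ) ^ 2 + ((j : ℂ) + 1 / 2) ^ 2)) := by
      rw [← hK]; ring
    rw [this]
    have e2 : ((u : ℂ) + e * (j + 1 / 2)) * (((u : ℂ) + e / 2) ^ 2 + ((j : ℂ) + 1) ^ 2)
        = ((u : ℂ) ^ 2 + ((j : ℂ) + 1 / 2) ^ 2) * (u + e * (j + 1 + 1 / 2)) := by
      linear_combination ((u : ℂ) * (j + 1/2 + 1 / 4) + e * (j + 1 / 2) / 4) * he
    linear_combination ((j.factorial : ℂ) ^ 2 * (Kpoly j u : ℝ)) * e2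

/-- The values of `contourFn` on the horizontal lines `Im z = ±1/2` (`e = ±i`). -/
lemma contourFn_shift (j : ℕ) (u : ℝ) {e : ℂ} (he : e ^ 2 = -1)
    (hs : Complex.sinh (π * (u + e / 2)) = e * Complex.cosh (π * u))
    (hc : Complex.cosh (π * (u + e / 2)) = e * Complex.sinh (π * u)) :
    contourFn j (u + e / 2) = -e * (u + e / 2) ^ 2 * (u + e * (j + 1 / 2)) *
      ((j.factorial : ℂ) ^ 2 * (Kpoly j u : ℝ)) *
      (Complex.sinh (π * u) / Complex.cosh (π * u) ^ 2) := by
  have h := prod_shift j u he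
  rw [contourFn, hs, hc, mul_pow, he]
  generalize (∏ l ∈ Finset.Icc 1 j, (((u : ℂ) + e / 2) ^ 2 + (l : ℂ) ^ 2)) = P at *
  have : (u + e / 2) ^ 3 * (e * Complex.sinh (π * u)) / (-1 * Complex.cosh (π * u) ^ 2) * P
      = -e * (u + e / 2) ^ 2 * ((u + e / 2) * P) *
      (Complex.sinh (π * u) / Complex.cosh (π * u) ^ 2) := by
    rw [neg_one_mul, div_neg]
    ring
  rw [this, h]
  ring

lemma contourFn_top (j : ℕ) (u : ℝ) :
    contourFn j (u + Complex.I / 2) = -Complex.I * (u + Complex.I / 2) ^ 2 *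
      (u + Complex.I * (j + 1 / 2)) * ((j.factorial : ℂ) ^ 2 * (Kpoly j u : ℝ)) *
      (Complex.sinh (π * u) / Complex.cosh (π * u) ^ 2) := by
  have e1 : (π : ℂ) * (u + Complex.I / 2) = π * u + (π / 2 : ℂ) * Complex.I := by ring
  refine contourFn_shift j u Complex.I_sq ?_ ?_
  · rw [e1, Complex.sinh_add, Complex.sinh_mul_I, Complex.cosh_mul_I, Complex.sin_pi_div_two,
      Complex.cos_pi_div_two]
    ring
  · rw [e1, Complex.cosh_add, Complex.sinh_mul_I, Complex.cosh_mul_I, Complex.sin_pi_div_two,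
      Complex.cos_pi_div_two]
    ring

lemma contourFn_bot (j : ℕ) (u : ℝ) :
    contourFn j (u + (-Complex.I) / 2) = -(-Complex.I) * (u + (-Complex.I) / 2) ^ 2 *
      (u + (-Complex.I) * (j + 1 / 2)) * ((j.factorial : ℂ) ^ 2 * (Kpoly j u : ℝ)) *
      (Complex.sinh (π * u) / Complex.cosh (π * u) ^ 2) := by
  have e1 : (π : ℂ) * (u + (-Complex.I) / 2) = π * u - (π / 2 : ℂ) * Complex.I := by ring
  refine contourFn_shift j u (by rw [neg_sq, Complex.I_sq]) ?_ ?_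
  · rw [e1, Complex.sinh_sub, Complex.sinh_mul_I, Complex.cosh_mul_I, Complex.sin_pi_div_two,
      Complex.cos_pi_div_two]
    ring
  · rw [e1, Complex.cosh_sub, Complex.sinh_mul_I, Complex.cosh_mul_I, Complex.sin_pi_div_two,
      Complex.cos_pi_div_two]
    ring

lemma contourFn_bot_sub_top (j : ℕ) (u : ℝ) :
    contourFn j (u + (-Complex.I) / 2) - contourFn j (u + Complex.I / 2) =
      Complex.I * ((j.factorial : ℂ) ^ 2 / π) *
        ((Kpoly j u * (u ^ 2 - j - 3 / 4) * wt u : ℝ) : ℂ) := by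
  have hpi : (π : ℂ) ≠ 0 := by exact_mod_cast pi_ne_zero
  rw [contourFn_bot, contourFn_top, wt]
  push_cast
  have h2 : (j.factorial : ℂ) ^ 2 / π * (2 * π * u * Complex.sinh (π * u) / Complex.cosh (π * u) ^ 2)
    = (j.factorial : ℂ) ^ 2 * (2 * u) * (Complex.sinh (π * u) / Complex.cosh (π * u) ^ 2) := by
    field_simp
  have h3 : Complex.I * ((j.factorial : ℂ) ^ 2 / π) * ((Kpoly j u : ℝ) * ((u:ℂ) ^ 2 - j - 3 / 4) *
      (2 * π * u * Complex.sinh (π * u) / Complex.cosh (π * u) ^ 2))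
     = Complex.I * ((Kpoly j u : ℝ) * ((u:ℂ) ^ 2 - j - 3 / 4)) *
      ((j.factorial : ℂ) ^ 2 * (2 * u) * (Complex.sinh (π * u) / Complex.cosh (π * u) ^ 2)) := by
    rw [← h2]; ring
  rw [h3]
  generalize Complex.sinh (π * u) / Complex.cosh (π * u) ^ 2 = s
  have hI := Complex.I_sq
  generalize Complex.I = e at *
  linear_combination (2 * e * (u/4 + (j+1/2) * u) * (j.factorial : ℂ) ^ 2 * (Kpoly j u : ℝ) * s) * hI

/-- The far vertical side of the rectangle contributes `O(T^{2j+3} e^{-πT})`. -/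
lemma norm_contourFn_le (j : ℕ) {T : ℝ} (hT : 1 ≤ T) {y : ℝ} (hy : |y| ≤ 1 / 2) :
    ‖contourFn j (T + y * Complex.I)‖ ≤
      16 * ((T + (j + 1)) ^ (2 * j + 3) * Real.exp (-(π * T))) := by
  set z : ℂ := T + y * Complex.I with hzdef
  have hT0 : 0 ≤ T := by linarith
  have hz : ‖z‖ ≤ T + 1 := by
    calc ‖z‖ ≤ ‖(T : ℂ)‖ + ‖(y : ℂ) * Complex.I‖ := norm_add_le _ _
      _ = T + |y| := by simp [abs_of_nonneg hT0]
      _ ≤ _ := by linarith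
  have hre : ((π : ℂ) * z).re = π * T := by simp [hzdef]
  have he1 : ‖Complex.exp (π * z)‖ = Real.exp (π * T) := by rw [Complex.norm_exp, hre]
  have he2 : ‖Complex.exp (-(π * z))‖ = Real.exp (-(π * T)) := by
    rw [Complex.norm_exp, Complex.neg_re, hre]
  have hpT : 1 ≤ π * T := by nlinarith [pi_gt_three]
  have hE : 2 ≤ Real.exp (π * T) := by
    have := Real.add_one_le_exp (π * T); linarith
  have hEinv : Real.exp (-(π * T)) * Real.exp (π * T) = 1 := by
    rw [← Real.exp_add]; simp
  have hEpos := Real.exp_pos (-(π * T))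
  have hEle : Real.exp (-(π * T)) ≤ Real.exp (π * T) / 2 := by nlinarith
  have hcosh : ‖Complex.cosh (π * z)‖ ≤ Real.exp (π * T) := by
    rw [Complex.cosh, norm_div, Complex.norm_two]
    have := norm_add_le (Complex.exp (π * z)) (Complex.exp (-(π * z)))
    rw [he1, he2] at this
    linarith
  have hsinh : Real.exp (π * T) / 4 ≤ ‖Complex.sinh (π * z)‖ := by
    rw [Complex.sinh, norm_div, Complex.norm_two]
    have := norm_sub_norm_le (Complex.exp (π * z)) (Complex.exp (-(π * z)))
    rw [he1, he2] at this
    linarith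
  have hq : ‖Complex.cosh (π * z)‖ / ‖Complex.sinh (π * z)‖ ^ 2 ≤ 16 * Real.exp (-(π * T)) := by
    calc ‖Complex.cosh (π * z)‖ / ‖Complex.sinh (π * z)‖ ^ 2
        ≤ Real.exp (π * T) / (Real.exp (π * T) / 4) ^ 2 := by gcongr
      _ = _ := by rw [Real.exp_neg]; field_simp; norm_num
  have hP : ‖∏ l ∈ Finset.Icc 1 j, (z ^ 2 + (l : ℂ) ^ 2)‖ ≤ (T + (j + 1)) ^ (2 * j) := by
    rw [norm_prod]
    calc ∏ l ∈ Finset.Icc 1 j, ‖z ^ 2 + (l : ℂ) ^ 2‖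
        ≤ ∏ l ∈ Finset.Icc 1 j, (T + (j + 1)) ^ 2 := by
          refine Finset.prod_le_prod (fun _ _ => norm_nonneg _) fun l hl => ?_
          have hlj : (l : ℝ) ≤ j := by exact_mod_cast (Finset.mem_Icc.1 hl).2
          have h1 := norm_add_le (z ^ 2) ((l : ℂ) ^ 2)
          rw [norm_pow, norm_pow, Complex.norm_natCast] at h1
          have h0 := norm_nonneg z
          have hl0 : (0 : ℝ) ≤ l := Nat.cast_nonneg l
          calc _ ≤ ‖z‖ ^ 2 + (l : ℝ) ^ 2 := h1
            _ ≤ (‖z‖ + l) ^ 2 := by nlinarith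
            _ ≤ (T + (j + 1)) ^ 2 := by
              have : ‖z‖ + l ≤ T + (j + 1) := by linarith
              gcongr
      _ = _ := by simp [pow_mul]
  have hz3 : ‖z‖ ^ 3 ≤ (T + (j + 1)) ^ 3 := by
    have : (0 : ℝ) ≤ j := Nat.cast_nonneg j
    gcongr; linarith
  calc ‖contourFn j z‖ = ‖z‖ ^ 3 * (‖Complex.cosh (π * z)‖ / ‖Complex.sinh (π * z)‖ ^ 2) *
        ‖∏ l ∈ Finset.Icc 1 j, (z ^ 2 + (l : ℂ) ^ 2)‖ := by
        rw [contourFn, norm_mul, norm_div, norm_mul, norm_pow, norm_pow, mul_div_assoc]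
    _ ≤ (T + (j + 1)) ^ 3 * (16 * Real.exp (-(π * T))) * (T + (j + 1)) ^ (2 * j) := by
        gcongr
    _ = _ := by rw [pow_add]; ring

/-- `contourFn j` is odd, so the near vertical side contributes nothing. -/
lemma integral_contourFn_imag_axis (j : ℕ) :
    ∫ y : ℝ in (-1 / 2)..(1 / 2), contourFn j (y * Complex.I) = 0 := by
  have h := intervalIntegral.integral_comp_neg (a := -1 / 2) (b := 1 / 2)
    fun y : ℝ => contourFn j (y * Complex.I)
  have h2 : (fun y : ℝ => contourFn j ((-y : ℝ) * Complex.I))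
      = fun y : ℝ => -contourFn j (y * Complex.I) := by
    funext y
    rw [← contourFn_neg]
    push_cast
    ring_nf
  rw [h2, intervalIntegral.integral_neg] at h
  norm_num at h ⊢
  exact self_eq_neg.1 h.symm

/-- Cauchy's theorem on the rectangle `[0, T] × [-1/2, 1/2]`. -/
lemma integral_rect (j : ℕ) {T : ℝ} (hT : 0 ≤ T) :
    Complex.I * ((j.factorial : ℂ) ^ 2 / π) *
      ((∫ u in (0 : ℝ)..T, Kpoly j u * (u ^ 2 - j - 3 / 4) * wt u : ℝ) : ℂ)
    = -(Complex.I * ∫ y : ℝ in (-1 / 2)..(1 / 2), contourFn j (T + y * Complex.I)) := by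
  have hrect := Complex.integral_boundary_rect_eq_zero_of_continuousOn_of_differentiableOn
    (contourFn j) ⟨0, -1 / 2⟩ ⟨T, 1 / 2⟩ (by
      intro z hz
      rw [Complex.mem_reProdIm, Set.uIcc_of_le (by norm_num : (-1 / 2 : ℝ) ≤ 1 / 2)] at hz
      have him : |z.im| ≤ 1 / 2 := abs_le.2 ⟨by linarith [hz.2.1], hz.2.2⟩
      by_cases h0 : z = 0
      · rw [h0]; exact (continuousAt_contourFn_zero j).continuousWithinAt
      · exact (differentiableAt_contourFn j h0 him).continuousAt.continuousWithinAt) (by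
      intro z hz
      simp only [Complex.mem_reProdIm, min_eq_left hT, max_eq_right hT] at hz
      rw [min_eq_left (by norm_num), max_eq_right (by norm_num)] at hz
      have him : |z.im| ≤ 1 / 2 := abs_le.2 ⟨by linarith [hz.2.1], hz.2.2.le⟩
      have h0 : z ≠ 0 := by
        rintro rfl
        exact lt_irrefl _ hz.1.1
      exact (differentiableAt_contourFn j h0 him).differentiableWithinAt)
  have eb : ∀ x : ℝ, (x : ℂ) + ((-1 / 2 : ℝ) : ℂ) * Complex.I = x + (-Complex.I) / 2 := by
    intro x; push_cast; ring
  have et : ∀ x : ℝ, (x : ℂ) + ((1 / 2 : ℝ) : ℂ) * Complex.I = x + Complex.I / 2 := by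
    intro x; push_cast; ring
  have hcont : Continuous fun u : ℝ =>
      Complex.sinh (π * (u : ℂ)) / Complex.cosh (π * (u : ℂ)) ^ 2 := by
    refine Continuous.div (by fun_prop) (by fun_prop) fun u => pow_ne_zero _ ?_
    exact_mod_cast (Real.cosh_pos (π * u)).ne'
  have hK := Complex.continuous_ofReal.comp (continuous_Kpoly j)
  simp only [Function.comp_def] at hK
  have cb : Continuous fun u : ℝ => contourFn j (u + (-Complex.I) / 2) := by
    simp_rw [contourFn_bot]
    fun_prop
  have ct : Continuous fun u : ℝ => contourFn j (u + Complex.I / 2) := by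
    simp_rw [contourFn_top]
    fun_prop
  simp only [eb, et, Complex.ofReal_zero, zero_add, integral_contourFn_imag_axis, smul_eq_mul,
    mul_zero, sub_zero] at hrect
  rw [← intervalIntegral.integral_sub (cb.intervalIntegrable _ _) (ct.intervalIntegrable _ _)]
    at hrect
  simp_rw [contourFn_bot_sub_top] at hrect
  rw [intervalIntegral.integral_const_mul, intervalIntegral.integral_ofReal] at hrect
  exact eq_neg_of_add_eq_zero_left hrect

lemma integrableOn_recurrence (j : ℕ) :
    IntegrableOn (fun u => Kpoly j u * (u ^ 2 - j - 3 / 4) * wt u) (Set.Ioi 0) := by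
  obtain ⟨p, hp⟩ := exists_poly_Kpoly j
  refine (integrableOn_poly_mul_wt
    (p * (Polynomial.X ^ 2 - Polynomial.C (j : ℝ) - Polynomial.C (3 / 4)))).congr_fun
    (fun u _ => ?_) measurableSet_Ioi
  beta_reduce
  rw [Polynomial.eval_mul, hp]
  simp

/-- As `u² - j - 3/4 = (u² + (j + 1/2)²) - (j + 1)²`, this says that `K_j` and `K_{j+1}` have the
same integral against the weight. -/
lemma integral_recurrence (j : ℕ) :
    ∫ u in Set.Ioi (0 : ℝ), Kpoly j u * (u ^ 2 - j - 3 / 4) * wt u = 0 := by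
  have h1 := intervalIntegral_tendsto_integral_Ioi 0 (integrableOn_recurrence j) tendsto_id
  refine tendsto_nhds_unique h1 ?_
  have hf : (0 : ℝ) < (j.factorial : ℝ) ^ 2 := by
    have := j.factorial_pos
    positivity
  refine squeeze_zero_norm' (a := fun T => π / (j.factorial : ℝ) ^ 2 *
    (16 * ((T + (j + 1)) ^ (2 * j + 3) * Real.exp (-(π * T))))) ?_ ?_
  · filter_upwards [eventually_ge_atTop 1] with T hT
    have hr := congrArg norm (integral_rect j (T := T) (by linarith))
    have hb := intervalIntegral.norm_integral_le_of_norm_le_const (a := -1 / 2) (b := 1 / 2)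
      (f := fun y : ℝ => contourFn j (T + y * Complex.I))
      (C := 16 * ((T + (j + 1)) ^ (2 * j + 3) * Real.exp (-(π * T)))) (by
        intro y hy
        rw [Set.uIoc_of_le (by norm_num)] at hy
        exact norm_contourFn_le j hT (abs_le.2 ⟨by linarith [hy.1], hy.2⟩))
    rw [norm_neg, norm_mul, norm_mul, norm_mul, Complex.norm_I, one_mul, one_mul, norm_div,
      norm_pow, Complex.norm_natCast, Complex.norm_real, Complex.norm_real,
      Real.norm_of_nonneg pi_pos.le] at hr
    rw [← hr, show |(1 / 2 : ℝ) - -1 / 2| = 1 by norm_num, mul_one] at hb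
    simp only [id]
    have h3 := mul_le_mul_of_nonneg_left hb (div_pos pi_pos hf).le
    rwa [← mul_assoc, show π / (j.factorial : ℝ) ^ 2 * ((j.factorial : ℝ) ^ 2 / π) = 1 by
      field_simp, one_mul] at h3
  · simpa using ((tendsto_shift_pow_mul_exp (j + 1) (2 * j + 3)).const_mul 16).const_mul
      (π / (j.factorial : ℝ) ^ 2)

lemma integral_Kpoly (j : ℕ) : ∫ u in Set.Ioi (0 : ℝ), Kpoly j u * wt u = 1 := by
  induction j with
  | zero => simpa [Kpoly_zero] using integral_wt
  | succ j ih =>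
    have hj : ((j : ℝ) + 1) ^ 2 ≠ 0 := by positivity
    have e : ∀ u, Kpoly (j + 1) u * wt u = Kpoly j u * wt u +
        (((j : ℝ) + 1) ^ 2)⁻¹ * (Kpoly j u * (u ^ 2 - j - 3 / 4) * wt u) := by
      intro u
      have := Kpoly_succ j u
      have h2 : Kpoly (j + 1) u = (((j : ℝ) + 1) ^ 2)⁻¹ *
          (Kpoly j u * (u ^ 2 + ((j : ℝ) + 1 / 2) ^ 2)) := by
        rw [← this, inv_mul_cancel_left₀ hj]
      rw [h2]
      field_simp
      ring
    simp_rw [e]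
    rw [integral_add (by simpa [Kpoly_zero, IntegrableOn] using integrableOn_K_mul_K j 0)
      ((integrableOn_recurrence j).const_mul _), ih, integral_const_mul, integral_recurrence]
    simp

/-! ### The Gram matrix of the `K_j` -/

/-- Multiplying out `K_{j+1} K_k` and `K_j K_{k+1}` gives
`(j+1)² K_{j+1} K_k - (k+1)² K_j K_{k+1} = (j - k)(j + k + 1) K_j K_k`, which reduces every entry
of the Gram matrix to the column `k = 0`. -/
lemma integral_K_mul_K (j k : ℕ) :
    ∫ u in Set.Ioi (0 : ℝ), Kpoly j u * Kpoly k u * wt u = ((j + k).choose j : ℝ) := by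
  induction k generalizing j with
  | zero => simpa [Kpoly_zero] using integral_Kpoly j
  | succ k ih =>
    have hk : ((k : ℝ) + 1) ^ 2 ≠ 0 := by positivity
    have e : ∀ u, Kpoly j u * Kpoly (k + 1) u * wt u = (((k : ℝ) + 1) ^ 2)⁻¹ *
        (((j : ℝ) + 1) ^ 2 * (Kpoly (j + 1) u * Kpoly k u * wt u) -
          ((j : ℝ) - k) * (j + k + 1) * (Kpoly j u * Kpoly k u * wt u)) := by
      intro u
      rw [eq_inv_mul_iff_mul_eq₀ hk]
      linear_combination (Kpoly j u * wt u) * Kpoly_succ k u - (Kpoly k u * wt u) * Kpoly_succ j u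
    simp_rw [e]
    rw [integral_const_mul, integral_sub ((integrableOn_K_mul_K _ _).const_mul _)
      ((integrableOn_K_mul_K _ _).const_mul _), integral_const_mul, integral_const_mul, ih, ih,
      inv_mul_eq_iff_eq_mul₀ hk]
    -- both neighbouring binomials are multiples of `C(j + k, j)`
    have h1 : ((j : ℝ) + 1) * ((j + 1 + k).choose (j + 1) : ℝ)
        = (j + k + 1) * ((j + k).choose j : ℝ) := by
      have := Nat.add_one_mul_choose_eq (j + k) j
      rw [show j + 1 + k = j + k + 1 by ring]
      have h : ((j + k + 1 : ℕ) : ℝ) * ((j + k).choose j : ℝ)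
        = ((j + k + 1).choose (j + 1) : ℝ) * ((j + 1 : ℕ) : ℝ) := by exact_mod_cast this
      push_cast at h
      linarith
    have h2 : ((k : ℝ) + 1) * ((j + (k + 1)).choose j : ℝ)
        = (j + k + 1) * ((j + k).choose j : ℝ) := by
      have := Nat.choose_mul_succ_eq (j + k) j
      rw [show j + k + 1 - j = k + 1 by omega] at this
      have h : ((j + k).choose j : ℝ) * ((j + k + 1 : ℕ) : ℝ)
        = ((j + k + 1).choose j : ℝ) * ((k + 1 : ℕ) : ℝ) := by exact_mod_cast this
      push_cast at h
      rw [show j + (k + 1) = j + k + 1 by ring]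
      linarith
    linear_combination ((j : ℝ) + 1) * h1 - ((k : ℝ) + 1) * h2

/-! ### Binomial inversion -/

lemma sum_eq_fwdDiff (m y : ℕ) (f : ℕ → ℤ) :
    ∑ k ∈ Finset.range (m + 1), (m.choose k : ℤ) * (-1) ^ k * f (y + k)
      = (-1) ^ m * (fwdDiff 1)^[m] f y := by
  rw [fwdDiff_iter_eq_sum_shift, Finset.mul_sum]
  refine Finset.sum_congr rfl fun k hk => ?_
  have hkm : k ≤ m := Nat.lt_succ_iff.1 (Finset.mem_range.1 hk)
  have : (-1 : ℤ) ^ m * (-1) ^ (m - k) = (-1) ^ k := by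
    obtain ⟨d, rfl⟩ := Nat.exists_eq_add_of_le hkm
    rw [Nat.add_sub_cancel_left, ← pow_add, show k + d + d = k + 2 * d by ring, pow_add, pow_mul]
    simp
  simp only [smul_eq_mul, mul_one]
  rw [← this]
  ring

lemma sum_choose_add (m j : ℕ) :
    ∑ k ∈ Finset.range (m + 1), (m.choose k : ℤ) * (-1) ^ k * ((j + k).choose j : ℤ)
      = (-1) ^ m * (j.choose m : ℤ) := by
  rw [sum_eq_fwdDiff m j fun x => (x.choose j : ℤ)]
  congr 1
  rcases le_or_gt m j with h | h
  · obtain ⟨d, rfl⟩ := Nat.exists_eq_add_of_le h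
    rw [fwdDiff_iter_choose]
    rw [Nat.choose_symm_add]
  · obtain ⟨d, rfl⟩ := Nat.exists_eq_add_of_lt h
    rw [Nat.choose_eq_zero_of_lt h, show j + d + 1 = d + 1 + j by ring, Function.iterate_add_apply]
    have h0 := fwdDiff_iter_choose 0 j
    rw [add_zero] at h0
    rw [h0, Function.iterate_succ_apply]
    simp [fwdDiff_iter_eq_sum_shift]

lemma sum_sum_choose (n m : ℕ) :
    ∑ j ∈ Finset.range (n + 1), ∑ k ∈ Finset.range (m + 1),
      ((n.choose j : ℝ) * (-1) ^ j) * ((m.choose k : ℝ) * (-1) ^ k) * ((j + k).choose j : ℝ)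
      = if n = m then 1 else 0 := by
  have key : ∑ j ∈ Finset.range (n + 1), ∑ k ∈ Finset.range (m + 1),
      ((n.choose j : ℤ) * (-1) ^ j) * ((m.choose k : ℤ) * (-1) ^ k) * ((j + k).choose j : ℤ)
      = if n = m then 1 else 0 := by
    simp_rw [mul_assoc _ (_ * _) (Nat.cast (Nat.choose (_ + _) _)), ← Finset.mul_sum,
      sum_choose_add]
    have h := sum_eq_fwdDiff n 0 fun x => (x.choose m : ℤ)
    rw [fwdDiff_iter_choose_zero] at h
    simp only [zero_add] at h
    simp_rw [mul_left_comm _ ((-1 : ℤ) ^ m)]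
    rw [← Finset.mul_sum, h]
    split_ifs with hnm
    · rw [hnm, mul_one, ← pow_add, ← two_mul, pow_mul]; simp
    · simp
  exact_mod_cast congrArg (fun x : ℤ => (x : ℝ)) key

/-- Orthonormality of the polynomials `P_n` for the weight
`2πu sinh(πu)/cosh²(πu)` on `[0,∞)`. -/
theorem Ppoly_orthonormal (n m : ℕ) :
    ∫ u in Set.Ioi (0 : ℝ),
        Ppoly n u * Ppoly m u * (2 * π * u * Real.sinh (π * u) / Real.cosh (π * u) ^ 2)
      = if n = m then 1 else 0 := by
  have e : ∀ u : ℝ, Ppoly n u * Ppoly m u *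
      (2 * π * u * Real.sinh (π * u) / Real.cosh (π * u) ^ 2) =
      ∑ j ∈ Finset.range (n + 1), ∑ k ∈ Finset.range (m + 1),
        ((n.choose j : ℝ) * (-1) ^ j) * ((m.choose k : ℝ) * (-1) ^ k) *
          (Kpoly j u * Kpoly k u * wt u) := by
    intro u
    rw [Ppoly, Ppoly, Finset.sum_mul_sum, Finset.sum_mul]
    refine Finset.sum_congr rfl fun j _ => ?_
    rw [Finset.sum_mul]
    refine Finset.sum_congr rfl fun k _ => ?_
    rw [wt]
    ring
  simp_rw [e]
  rw [integral_finsetSum _ fun j _ => integrable_finsetSum _ fun k _ =>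
    (integrableOn_K_mul_K j k).const_mul _]
  rw [← sum_sum_choose]
  refine Finset.sum_congr rfl fun j _ => ?_
  rw [integral_finsetSum _ fun k _ => (integrableOn_K_mul_K j k).const_mul _]
  refine Finset.sum_congr rfl fun k _ => ?_
  rw [integral_const_mul, integral_K_mul_K]
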